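/- arXiv:1710.10322 — 3 statements merged into one kernel-verified Lean document; each statement's English description precedes it below -/
import Mathlib

section
/- Let F be a field, let a ≥ 0, ℓ ≥ 1, and t_1,…,t_ℓ ≥ 1 be integers with t_1 + ⋯ + t_ℓ = h. For i ∈ {1,…,ℓ}, let C_i be an a×(a+t_i) matrix over F and D_i an h×(a+t_i) matrix over F, with D_i^{(S)} denoting the submatrix of D_i on the rows indexed by S. Then the determinant of the (aℓ+h)×(aℓ+h) block matrix whose first aℓ rows contain C_1,…,C_ℓ in block-diagonal position and whose last h rows are [D_1 | ⋯ | D_ℓ] equals (−1)^{a·Σ_{i=1}^{ℓ} t_i(ℓ−i)} times the sum, over all partitions S_1 ⊔ ⋯ ⊔ S_ℓ = {1,…,h} with |S_i| = t_i, of sgn(S_1,…,S_ℓ) · ∏_{i=1}^{ℓ} det[C_i; D_i^{(S_i)}]. -/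
/-- The order-preserving ("block major") bijection between `Σ i : Fin m, Fin (w i)` and
`Fin (∑ i, w i)`: the pair `⟨i, j⟩` is sent to `(∑ k < i, w k) + j`. -/
noncomputable def finSigmaOrderFinEquiv {m : ℕ} (w : Fin m → ℕ) :
    (Σ i : Fin m, Fin (w i)) ≃ Fin (∑ i, w i) :=
  (toLex : (Σ i : Fin m, Fin (w i)) ≃ Σₗ i : Fin m, Fin (w i)).trans
    (Fintype.orderIsoFinOfCardEq (Σₗ i : Fin m, Fin (w i))
        ((Fintype.card_congr (ofLex : (Σₗ i : Fin m, Fin (w i)) ≃ Σ i : Fin m, Fin (w i))).trans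
          (by simp))).symm.toEquiv

/-!
Generalised Laplace expansion along the column blocks writes the determinant as a signed sum, over
all ways of distributing the rows among the blocks, of products of minors. If a row of `C i` goes to
a block other than the `i`-th, the corresponding minor has a zero row. In the surviving terms block
`i` receives all rows of `C i` together with `t i` of the `h` common rows, so these terms correspond
to the ordered partitions of the common rows. The sign is read off the inversions: each common row
of block `i` is crossed by the `a` rows of `C i'` for each of the later blocks `i' > i`, which gives
the exponent `a * ∑ i, t i * (ℓ - 1 - i)` for zero-based `i`, and the remaining inversions are those
of the partition.
-/

section BlockPermutations

variable {ι : Type*} {β : ι → Type*}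

theorem sign_sigmaCongrRight_mulSingle [Fintype ι] [DecidableEq ι] [∀ i, Fintype (β i)]
    [∀ i, DecidableEq (β i)] (i : ι) (p : Equiv.Perm (β i)) :
    Equiv.Perm.sign (Equiv.Perm.sigmaCongrRight (Pi.mulSingle i p)) = Equiv.Perm.sign p := by
  rw [← Equiv.Perm.sign_extendDomain p (Equiv.sigmaSubtype i).symm]
  congr 1
  ext1 ⟨j, x⟩
  rcases eq_or_ne j i with rfl | hj
  · refine Eq.trans ?_ (Equiv.Perm.extendDomain_apply_image p (Equiv.sigmaSubtype j).symm x).symm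
    simp [Equiv.Perm.sigmaCongrRight, Equiv.sigmaSubtype]
  · refine Eq.trans ?_ (Equiv.Perm.extendDomain_apply_not_subtype p
      (Equiv.sigmaSubtype i).symm (b := ⟨j, x⟩) hj).symm
    simp [Equiv.Perm.sigmaCongrRight, hj]

theorem sign_sigmaCongrRight [Fintype ι] [DecidableEq ι] [∀ i, Fintype (β i)]
    [∀ i, DecidableEq (β i)] (π : ∀ i, Equiv.Perm (β i)) :
    Equiv.Perm.sign (Equiv.Perm.sigmaCongrRight π) = ∏ i, Equiv.Perm.sign (π i) := by
  let prodSign : (∀ i, Equiv.Perm (β i)) →* ℤˣ :=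
    ∏ i, Equiv.Perm.sign.comp (Pi.evalMonoidHom (fun i => Equiv.Perm (β i)) i)
  have hom_eq : Equiv.Perm.sign.comp (Equiv.Perm.sigmaCongrRightHom β) = prodSign := by
    refine MonoidHom.pi_ext (M := fun i => Equiv.Perm (β i)) fun i p => ?_
    have hprod : prodSign (Pi.mulSingle i p) = Equiv.Perm.sign p := by
      simp only [prodSign, MonoidHom.finsetProd_apply, MonoidHom.comp_apply,
        Pi.evalMonoidHom_apply]
      rw [Fintype.prod_eq_single i fun j hj => by simp [hj], Pi.mulSingle_eq_same]
    exact (sign_sigmaCongrRight_mulSingle i p).trans hprod.symm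
  simpa [prodSign, MonoidHom.finsetProd_apply] using DFunLike.congr_fun hom_eq π

/-- A bijection from a sigma type that is strictly increasing on each block. It encodes the ordered
partition of `m` into the images of the blocks, each listed in increasing order. -/
def BlockStrictMono {m : Type*} [∀ i, Preorder (β i)] [Preorder m] (e : (Σ i, β i) ≃ m) : Prop :=
  ∀ i, StrictMono fun j => e ⟨i, j⟩

end BlockPermutations

section LaplaceExpansion

theorem det_eq_sum_equiv {R c m : Type*} [CommRing R] [Fintype c] [DecidableEq c] [Fintype m]
    [DecidableEq m] (κ : c ≃ m) (A : Matrix m m R) :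
    A.det = ∑ τ : c ≃ m,
      ((Equiv.Perm.sign (κ.symm.trans τ) : ℤ) : R) * ∏ x, A (τ x) (κ x) := by
  rw [Matrix.det_apply', ← Equiv.sum_comp (Equiv.equivCongr κ (Equiv.refl m))]
  refine Finset.sum_congr rfl fun τ _ => ?_
  rw [← Equiv.prod_comp κ]
  simp [Equiv.equivCongr]

variable {ι m : Type*} {n : ι → ℕ}

theorem exists_sigmaCongrRight_blockStrictMono [LinearOrder m] (τ : (Σ i, Fin (n i)) ≃ m) :
    ∃ π : ∀ i, Equiv.Perm (Fin (n i)),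
      BlockStrictMono ((Equiv.Perm.sigmaCongrRight π).trans τ) := by
  refine ⟨fun i => Tuple.sort fun j => τ ⟨i, j⟩, fun i => ?_⟩
  refine (Tuple.monotone_sort fun j => τ ⟨i, j⟩).strictMono_of_injective ?_
  exact (τ.injective.comp sigma_mk_injective).comp (Equiv.injective _)

theorem eq_of_sigmaCongrRight_trans_eq [PartialOrder m] {e e' : (Σ i, Fin (n i)) ≃ m}
    (he : BlockStrictMono e) (he' : BlockStrictMono e') {π π' : ∀ i, Equiv.Perm (Fin (n i))}
    (h : (Equiv.Perm.sigmaCongrRight π).trans e = (Equiv.Perm.sigmaCongrRight π').trans e') :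
    e = e' ∧ π = π' := by
  have happly : ∀ i j, e ⟨i, π i j⟩ = e' ⟨i, π' i j⟩ := fun i j => DFunLike.congr_fun h ⟨i, j⟩
  have heq : e = e' := by
    ext1 ⟨i, j⟩
    have hshuffle : (fun j => e' ⟨i, j⟩) =
        (fun j => e ⟨i, j⟩) ∘ ((π' i).symm.trans (π i) : Equiv.Perm _) := by
      funext j
      simp [happly]
    have hmono := (he' i).monotone
    rw [hshuffle] at hmono
    have huniq := Tuple.unique_monotone (σ := Equiv.refl _) (he i).monotone hmono
    rw [← hshuffle] at huniq
    exact congrFun huniq j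
  subst heq
  refine ⟨rfl, funext fun i => Equiv.ext fun j => ?_⟩
  exact sigma_mk_injective (β := fun i => Fin (n i)) (e.injective (happly i j))

variable [Fintype ι] [DecidableEq ι] [Fintype m] [LinearOrder m]

open Classical in
theorem sum_equiv_eq_sum_blockStrictMono {M : Type*} [AddCommMonoid M]
    (g : ((Σ i, Fin (n i)) ≃ m) → M) :
    ∑ τ, g τ = ∑ e : (Σ i, Fin (n i)) ≃ m with BlockStrictMono e,
      ∑ π : ∀ i, Equiv.Perm (Fin (n i)), g ((Equiv.Perm.sigmaCongrRight π).trans e) := by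
  rw [← Finset.sum_product']
  symm
  refine Finset.sum_bij (fun x _ => (Equiv.Perm.sigmaCongrRight x.2).trans x.1)
    (fun _ _ => Finset.mem_univ _) ?_ ?_ (fun _ _ => rfl)
  · rintro ⟨e, π⟩ hx ⟨e', π'⟩ hx' h
    simp only [Finset.mem_product, Finset.mem_filter_univ, Finset.mem_univ, and_true] at hx hx'
    obtain ⟨rfl, rfl⟩ := eq_of_sigmaCongrRight_trans_eq hx hx' h
    rfl
  · intro τ _
    obtain ⟨π, hπ⟩ := exists_sigmaCongrRight_blockStrictMono τ
    refine ⟨((Equiv.Perm.sigmaCongrRight π).trans τ, π⁻¹), by simpa using hπ, ?_⟩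
    ext1 x
    simp [Equiv.Perm.sigmaCongrRight]

open Classical in
theorem det_eq_sum_blockStrictMono {R : Type*} [CommRing R] (κ : (Σ i, Fin (n i)) ≃ m)
    (A : Matrix m m R) :
    A.det = ∑ e : (Σ i, Fin (n i)) ≃ m with BlockStrictMono e,
      ((Equiv.Perm.sign (κ.symm.trans e) : ℤ) : R) *
        ∏ i, (A.submatrix (fun j => e ⟨i, j⟩) (fun j => κ ⟨i, j⟩)).det := by
  rw [det_eq_sum_equiv κ, sum_equiv_eq_sum_blockStrictMono]
  refine Finset.sum_congr rfl fun e _ => ?_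
  simp_rw [Matrix.det_apply']
  rw [Fintype.prod_sum, Finset.mul_sum]
  refine Finset.sum_congr rfl fun π _ => ?_
  have hsign : Equiv.Perm.sign (κ.symm.trans ((Equiv.Perm.sigmaCongrRight π).trans e)) =
      Equiv.Perm.sign (κ.symm.trans e) * ∏ i, Equiv.Perm.sign (π i) := by
    rw [← sign_sigmaCongrRight, mul_comm, ← Equiv.Perm.sign_trans_trans]
  rw [hsign, Fintype.prod_sigma, Finset.prod_mul_distrib]
  push_cast
  exact mul_assoc _ _ _

end LaplaceExpansion

section Orders

theorem comp_initialSeg_eq_of_strictMono {α β γ : Type*} [LinearOrder α] [LinearOrder β]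
    [WellFoundedLT β] [Preorder γ] (j : α ≤i β) {f : β → γ} {g : α → γ} (hf : StrictMono f)
    (hg : StrictMono g) (hgf : ∀ x, g x ∈ Set.range f)
    (hlower : ∀ x y, f y ≤ g x → f y ∈ Set.range g) : f ∘ j = g := by
  choose p hp using hgf
  have hp_lt : ∀ x x', p x < p x' ↔ x < x' := fun x x' => by
    rw [← hf.lt_iff_lt, hp, hp, hg.lt_iff_lt]
  let pSeg : α ≤i β :=
    { toFun := p
      inj' := fun x x' h => hg.injective (by rw [← hp, ← hp, h])
      map_rel_iff' := hp_lt _ _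
      mem_range_of_rel' := fun x y hy => by
        obtain ⟨x', hx'⟩ := hlower x y (hp x ▸ hf.monotone hy.le)
        exact ⟨x', hf.injective ((hp x').trans hx')⟩ }
  funext x
  rw [Function.comp_apply, j.eq pSeg x]
  exact hp x

theorem exists_eq_sumCongr_refl {α β γ : Type*} (g : α ⊕ β ≃ α ⊕ γ)
    (hg : ∀ x, g (Sum.inl x) = Sum.inl x) :
    ∃ e : β ≃ γ, g = Equiv.sumCongr (Equiv.refl α) e := by
  have hinr : ∀ y, ∃ z, g (Sum.inr y) = Sum.inr z := fun y => by
    rcases hy : g (Sum.inr y) with x | z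
    · exact absurd (g.injective (hy.trans (hg x).symm)) Sum.inr_ne_inl
    · exact ⟨z, rfl⟩
  choose u hu using hinr
  have hbij : Function.Bijective u := by
    constructor
    · intro y y' h
      exact Sum.inr_injective (g.injective (by rw [hu, hu, h]))
    · intro z
      rcases hz : g.symm (Sum.inr z) with x | y
      · rw [Equiv.symm_apply_eq, hg] at hz
        exact absurd hz Sum.inr_ne_inl
      · rw [Equiv.symm_apply_eq, hu] at hz
        exact ⟨y, (Sum.inr_injective hz).symm⟩
  refine ⟨Equiv.ofBijective u hbij, Equiv.ext ?_⟩
  rintro (x | y)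
  · exact hg x
  · exact hu y

end Orders

section Indexing

variable {a ℓ h : ℕ} {t : Fin ℓ → ℕ}

theorem finProdFinEquiv_lt_iff {m n : ℕ} {p q : Fin m × Fin n} :
    finProdFinEquiv p < finProdFinEquiv q ↔ p.1 < q.1 ∨ p.1 = q.1 ∧ p.2 < q.2 := by
  have hmono : StrictMono fun x : Fin m ×ₗ Fin n => finProdFinEquiv (ofLex x) := by
    intro x y hxy
    rw [Fin.lt_def, finProdFinEquiv_apply_val, finProdFinEquiv_apply_val]
    rcases Prod.Lex.lt_iff.1 hxy with hfst | ⟨hfst, hsnd⟩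
    · have := Nat.mul_le_mul_left n (Nat.succ_le_of_lt hfst)
      have := (ofLex x).2.isLt
      grind
    · rw [hfst]
      exact Nat.add_lt_add_right hsnd _
  exact (hmono.lt_iff_lt (a := toLex p) (b := toLex q)).trans Prod.Lex.toLex_lt_toLex

/-- The positions of the rows of the block matrix: first the rows of the `C i`, block by block,
then the `h` common rows. -/
def rowEquiv (a ℓ h : ℕ) : (Fin ℓ × Fin a) ⊕ Fin h ≃ Fin (a * ℓ + h) :=
  (Equiv.sumCongr finProdFinEquiv (Equiv.refl (Fin h))).trans
    (finSumFinEquiv.trans (finCongr (by ring)))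

theorem rowEquiv_inl_lt_inl_iff {p q : Fin ℓ × Fin a} :
    rowEquiv a ℓ h (Sum.inl p) < rowEquiv a ℓ h (Sum.inl q) ↔
      p.1 < q.1 ∨ p.1 = q.1 ∧ p.2 < q.2 := by
  rw [← finProdFinEquiv_lt_iff]
  rfl

theorem rowEquiv_inl_lt_inr (p : Fin ℓ × Fin a) (j : Fin h) :
    rowEquiv a ℓ h (Sum.inl p) < rowEquiv a ℓ h (Sum.inr j) := by
  have := (finProdFinEquiv p).isLt
  simp only [rowEquiv, Equiv.trans_apply, Equiv.sumCongr_apply, Sum.map_inl, Sum.map_inr,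
    finSumFinEquiv_apply_left, finSumFinEquiv_apply_right, finCongr_apply, Fin.lt_def,
    Fin.val_cast, Fin.val_castAdd, Fin.val_natAdd]
  omega

theorem rowEquiv_inr_lt_inr_iff {j j' : Fin h} :
    rowEquiv a ℓ h (Sum.inr j) < rowEquiv a ℓ h (Sum.inr j') ↔ j < j' := by
  simp only [rowEquiv, Equiv.trans_apply, Equiv.sumCongr_apply, Sum.map_inr,
    finSumFinEquiv_apply_right, finCongr_apply, Fin.lt_def, Fin.val_cast, Fin.val_natAdd,
    add_lt_add_iff_left, Equiv.refl_apply]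

/-- The bijection `finSigmaOrderFinEquiv w` with its codomain rewritten as `Fin N`. -/
noncomputable def sigmaOrderEquiv {m N : ℕ} (w : Fin m → ℕ) (hw : ∑ i, w i = N) :
    (Σ i, Fin (w i)) ≃ Fin N :=
  (finSigmaOrderFinEquiv w).trans (finCongr hw)

theorem sigmaOrderEquiv_lt_iff {m N : ℕ} {w : Fin m → ℕ} (hw : ∑ i, w i = N)
    {x y : Σ i, Fin (w i)} :
    sigmaOrderEquiv w hw x < sigmaOrderEquiv w hw y ↔
      x.1 < y.1 ∨ x.1 = y.1 ∧ (x.2 : ℕ) < y.2 := by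
  subst hw
  have hlex : sigmaOrderEquiv w rfl x < sigmaOrderEquiv w rfl y ↔ toLex x < toLex y :=
    (Fintype.orderIsoFinOfCardEq (Σₗ i : Fin m, Fin (w i)) (by simp)).symm.lt_iff_lt
  rw [hlex, Sigma.Lex.lt_def]
  obtain ⟨i, j⟩ := x
  obtain ⟨i', j'⟩ := y
  refine or_congr Iff.rfl ⟨?_, ?_⟩
  · rintro ⟨rfl : i = i', hlt⟩
    exact ⟨rfl, hlt⟩
  · rintro ⟨rfl : i = i', hlt⟩
    exact ⟨rfl, hlt⟩

/-- Splits each column block, of width `a + t i`, into its first `a` columns and its last `t i`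
columns. -/
def splitBlocks (a : ℕ) (t : Fin ℓ → ℕ) :
    (Fin ℓ × Fin a) ⊕ (Σ i, Fin (t i)) ≃ Σ i, Fin (a + t i) :=
  ((Equiv.sigmaCongrRight fun _ => finSumFinEquiv.symm).trans
    ((Equiv.sigmaSumDistrib _ _).trans
      (Equiv.sumCongr (Equiv.sigmaEquivProd _ _) (Equiv.refl _)))).symm

@[simp]
theorem splitBlocks_inl (i : Fin ℓ) (k : Fin a) :
    splitBlocks a t (Sum.inl (i, k)) = ⟨i, Fin.castAdd (t i) k⟩ := rfl

@[simp]
theorem splitBlocks_inr (i : Fin ℓ) (j : Fin (t i)) :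
    splitBlocks a t (Sum.inr ⟨i, j⟩) = ⟨i, Fin.natAdd a j⟩ := rfl

/-- The positions of the columns of the block matrix, block by block. -/
noncomputable def columnEquiv (a : ℕ) (ht : ∑ i, t i = h) :
    (Σ i, Fin (a + t i)) ≃ Fin (a * ℓ + h) :=
  sigmaOrderEquiv (fun i => a + t i) (by simp [Finset.sum_add_distrib, ht, mul_comm])

theorem columnEquiv_lt_iff (ht : ∑ i, t i = h) {x y : Σ i, Fin (a + t i)} :
    columnEquiv a ht x < columnEquiv a ht y ↔ x.1 < y.1 ∨ x.1 = y.1 ∧ (x.2 : ℕ) < y.2 :=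
  sigmaOrderEquiv_lt_iff _

theorem columnEquiv_splitBlocks_inl_lt_inl_iff (ht : ∑ i, t i = h) {p q : Fin ℓ × Fin a} :
    columnEquiv a ht (splitBlocks a t (Sum.inl p)) <
        columnEquiv a ht (splitBlocks a t (Sum.inl q)) ↔
      rowEquiv a ℓ h (Sum.inl p) < rowEquiv a ℓ h (Sum.inl q) := by
  rw [columnEquiv_lt_iff, rowEquiv_inl_lt_inl_iff]
  rfl

theorem columnEquiv_splitBlocks_inr_lt_inl_iff (ht : ∑ i, t i = h) {x : Σ i, Fin (t i)}
    {p : Fin ℓ × Fin a} :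
    columnEquiv a ht (splitBlocks a t (Sum.inr x)) <
      columnEquiv a ht (splitBlocks a t (Sum.inl p)) ↔ x.1 < p.1 := by
  obtain ⟨i, j⟩ := x
  obtain ⟨i', k⟩ := p
  have hnot : ¬ a + (j : ℕ) < k := by omega
  simp only [columnEquiv_lt_iff, splitBlocks_inl, splitBlocks_inr, Fin.val_natAdd,
    Fin.val_castAdd, hnot, and_false, or_false]

theorem columnEquiv_splitBlocks_inr_lt_inr_iff (ht : ∑ i, t i = h) {x y : Σ i, Fin (t i)} :
    columnEquiv a ht (splitBlocks a t (Sum.inr x)) <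
        columnEquiv a ht (splitBlocks a t (Sum.inr y)) ↔
      sigmaOrderEquiv t ht x < sigmaOrderEquiv t ht y := by
  obtain ⟨i, j⟩ := x
  obtain ⟨i', j'⟩ := y
  simp only [columnEquiv_lt_iff, sigmaOrderEquiv_lt_iff, splitBlocks_inr, Fin.val_natAdd,
    add_lt_add_iff_left]

/-- Extends an assignment `e` of the common rows to column blocks to an assignment of all rows of
the block matrix, in which the `a` rows of `C i` go to the first `a` columns of block `i`. -/
def extendAssignment (a : ℕ) (e : (Σ i, Fin (t i)) ≃ Fin h) :
    (Σ i, Fin (a + t i)) ≃ Fin (a * ℓ + h) :=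
  (splitBlocks a t).symm.trans ((Equiv.sumCongr (Equiv.refl _) e).trans (rowEquiv a ℓ h))

@[simp]
theorem extendAssignment_splitBlocks_inl (e : (Σ i, Fin (t i)) ≃ Fin h) (p : Fin ℓ × Fin a) :
    extendAssignment a e (splitBlocks a t (Sum.inl p)) = rowEquiv a ℓ h (Sum.inl p) := by
  simp [extendAssignment]

@[simp]
theorem extendAssignment_splitBlocks_inr (e : (Σ i, Fin (t i)) ≃ Fin h) (x : Σ i, Fin (t i)) :
    extendAssignment a e (splitBlocks a t (Sum.inr x)) = rowEquiv a ℓ h (Sum.inr (e x)) := by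
  simp [extendAssignment]

theorem extendAssignment_castAdd (e : (Σ i, Fin (t i)) ≃ Fin h) (i : Fin ℓ) (k : Fin a) :
    extendAssignment a e ⟨i, Fin.castAdd (t i) k⟩ = rowEquiv a ℓ h (Sum.inl (i, k)) := by
  rw [← splitBlocks_inl, extendAssignment_splitBlocks_inl]

theorem extendAssignment_natAdd (e : (Σ i, Fin (t i)) ≃ Fin h) (i : Fin ℓ) (j : Fin (t i)) :
    extendAssignment a e ⟨i, Fin.natAdd a j⟩ = rowEquiv a ℓ h (Sum.inr (e ⟨i, j⟩)) := by
  rw [← splitBlocks_inr, extendAssignment_splitBlocks_inr]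

theorem extendAssignment_injective :
    Function.Injective (extendAssignment a : ((Σ i, Fin (t i)) ≃ Fin h) → _) := by
  intro e e' he
  ext1 x
  have := DFunLike.congr_fun he (splitBlocks a t (Sum.inr x))
  simpa using this

theorem blockStrictMono_extendAssignment_iff {e : (Σ i, Fin (t i)) ≃ Fin h} :
    BlockStrictMono (extendAssignment a e) ↔ BlockStrictMono e := by
  refine forall_congr' fun i => ⟨fun hmono j j' hj => ?_, fun hmono => ?_⟩
  · have := hmono ((Fin.strictMono_natAdd a) hj)
    simpa only [extendAssignment_natAdd, rowEquiv_inr_lt_inr_iff] using this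
  · intro x y hxy
    induction x using Fin.addCases with
    | left k =>
      induction y using Fin.addCases with
      | left k' =>
        simp only [extendAssignment_castAdd, rowEquiv_inl_lt_inl_iff]
        exact Or.inr ⟨trivial, hxy⟩
      | right j' =>
        simp only [extendAssignment_castAdd, extendAssignment_natAdd, rowEquiv_inl_lt_inr]
    | right j =>
      induction y using Fin.addCases with
      | left k' =>
        simp only [Fin.lt_def, Fin.val_natAdd, Fin.val_castAdd] at hxy
        omega
      | right j' =>
        simp only [extendAssignment_natAdd, rowEquiv_inr_lt_inr_iff]
        exact hmono (by simpa using hxy)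

/-- The inclusion of the first `a` elements of `Fin (a + n)`. -/
def castAddInitialSeg (a n : ℕ) : Fin a ≤i Fin (a + n) where
  toFun := Fin.castAdd n
  inj' := Fin.castAdd_injective a n
  map_rel_iff' := Iff.rfl
  mem_range_of_rel' k x hx := ⟨⟨x, (Fin.lt_def.1 hx).trans k.isLt⟩, rfl⟩

theorem BlockStrictMono.apply_castAdd {f : (Σ i, Fin (a + t i)) ≃ Fin (a * ℓ + h)}
    (hf : BlockStrictMono f) (hblock : ∀ i k, (f.symm (rowEquiv a ℓ h (Sum.inl (i, k)))).1 = i)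
    (i : Fin ℓ) (k : Fin a) :
    f ⟨i, Fin.castAdd (t i) k⟩ = rowEquiv a ℓ h (Sum.inl (i, k)) := by
  have hrow : StrictMono fun k => rowEquiv a ℓ h (Sum.inl (i, k)) := fun k k' hk =>
    rowEquiv_inl_lt_inl_iff.2 (Or.inr ⟨rfl, hk⟩)
  refine congrFun (comp_initialSeg_eq_of_strictMono (castAddInitialSeg a (t i)) (hf i) hrow
    (fun k => ?_) fun k y hy => ?_) k
  · obtain ⟨x, hx⟩ := f.surjective (rowEquiv a ℓ h (Sum.inl (i, k)))
    obtain rfl : x.1 = i := by rw [← hblock i k, ← hx, Equiv.symm_apply_apply]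
    exact ⟨x.2, hx⟩
  · obtain ⟨r, hr⟩ := (rowEquiv a ℓ h).surjective (f ⟨i, y⟩)
    rcases r with ⟨i', k'⟩ | j
    · obtain rfl : i' = i := by rw [← hblock i' k', hr, Equiv.symm_apply_apply]
      exact ⟨k', hr⟩
    · exact absurd (rowEquiv_inl_lt_inr (i, k) j) (hr ▸ hy).not_gt

theorem BlockStrictMono.exists_eq_extendAssignment {f : (Σ i, Fin (a + t i)) ≃ Fin (a * ℓ + h)}
    (hf : BlockStrictMono f)
    (hblock : ∀ i k, (f.symm (rowEquiv a ℓ h (Sum.inl (i, k)))).1 = i) :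
    ∃ e : (Σ i, Fin (t i)) ≃ Fin h, BlockStrictMono e ∧ extendAssignment a e = f := by
  obtain ⟨e, he⟩ := exists_eq_sumCongr_refl
    ((splitBlocks a t).trans (f.trans (rowEquiv a ℓ h).symm)) fun ⟨i, k⟩ => by
      simp [hf.apply_castAdd hblock]
  have hef : extendAssignment a e = f := by
    rw [extendAssignment, ← he]
    ext1 x
    simp
  exact ⟨e, blockStrictMono_extendAssignment_iff.1 (hef ▸ hf), hef⟩

end Indexing

section Signs

theorem sign_symm_trans_eq_prod_inversions {α : Type*} [Fintype α] {N : ℕ} (e₁ e₂ : α ≃ Fin N) :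
    Equiv.Perm.sign (e₁.symm.trans e₂) =
      ∏ y, ∏ x, if e₁ x < e₁ y ∧ e₂ y < e₂ x then -1 else 1 := by
  rw [Equiv.Perm.sign_eq_prod_prod_Iio, ← Equiv.prod_comp e₁]
  refine Finset.prod_congr rfl fun y _ => ?_
  have hIio : Finset.Iio (e₁ y) = Finset.univ.filter (· < e₁ y) := by ext; simp
  rw [hIio, Finset.prod_filter, ← Equiv.prod_comp e₁]
  refine Finset.prod_congr rfl fun x _ => ?_
  simp only [Equiv.trans_apply, Equiv.symm_apply_apply]
  have hne : x ≠ y → e₂ x ≠ e₂ y := e₂.injective.ne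
  grind

variable {a ℓ h : ℕ} {t : Fin ℓ → ℕ}

theorem prod_crossings (a : ℕ) (t : Fin ℓ → ℕ) :
    (∏ p : Fin ℓ × Fin a, ∏ x : Σ i, Fin (t i), if x.1 < p.1 then (-1 : ℤˣ) else 1) =
      (-1) ^ (a * ∑ i, t i * (ℓ - 1 - i)) := by
  have hlater : ∀ i : Fin ℓ, (∏ i' : Fin ℓ, if i < i' then (-1 : ℤˣ) else 1) =
      (-1) ^ (ℓ - 1 - i : ℕ) := fun i => by
    rw [← Finset.prod_filter, Finset.prod_const, Finset.filter_lt_eq_Ioi, Fin.card_Ioi]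
  calc
    _ = ∏ i, ∏ _j : Fin (t i), ∏ i', ∏ _k : Fin a, if i < i' then (-1 : ℤˣ) else 1 := by
      simp only [Finset.prod_comm (s := (Finset.univ : Finset (Fin ℓ × Fin a))),
        Fintype.prod_sigma, Fintype.prod_prod_type]
    _ = ∏ i, (-1) ^ (a * (t i * (ℓ - 1 - i))) := by
      simp only [Finset.prod_const, Finset.card_univ, Fintype.card_fin, Finset.prod_pow, hlater,
        ← pow_mul]
      exact Finset.prod_congr rfl fun i _ => congrArg _ (by ring)
    _ = (-1) ^ (a * ∑ i, t i * (ℓ - 1 - i)) := by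
      rw [Finset.prod_pow_eq_pow_sum, Finset.mul_sum]

theorem sign_extendAssignment (ht : ∑ i, t i = h) (e : (Σ i, Fin (t i)) ≃ Fin h) :
    Equiv.Perm.sign ((columnEquiv a ht).symm.trans (extendAssignment a e)) =
      (-1) ^ (a * ∑ i, t i * (ℓ - 1 - i)) *
        Equiv.Perm.sign ((sigmaOrderEquiv t ht).symm.trans e) := by
  have hasymm : ∀ p q : Fin ℓ × Fin a,
      ¬ (rowEquiv a ℓ h (Sum.inl p) < rowEquiv a ℓ h (Sum.inl q) ∧
        rowEquiv a ℓ h (Sum.inl q) < rowEquiv a ℓ h (Sum.inl p)) := fun p q hpq =>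
    lt_asymm hpq.1 hpq.2
  have hrow : ∀ (p : Fin ℓ × Fin a) (j : Fin h),
      ¬ rowEquiv a ℓ h (Sum.inr j) < rowEquiv a ℓ h (Sum.inl p) := fun p j =>
    (rowEquiv_inl_lt_inr p j).not_gt
  simp only [sign_symm_trans_eq_prod_inversions, ← prod_crossings,
    ← Equiv.prod_comp (splitBlocks a t), Fintype.prod_sum_type, extendAssignment_splitBlocks_inl,
    extendAssignment_splitBlocks_inr, columnEquiv_splitBlocks_inl_lt_inl_iff,
    columnEquiv_splitBlocks_inr_lt_inl_iff, columnEquiv_splitBlocks_inr_lt_inr_iff,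
    rowEquiv_inl_lt_inr, rowEquiv_inr_lt_inr_iff, hasymm, hrow, and_true, and_false, if_false,
    Finset.prod_const_one, one_mul]

end Signs

section BlockMatrix

variable {R : Type*} [Zero R] {a ℓ h : ℕ} {t : Fin ℓ → ℕ}

/-- The block matrix with the `C i` in block-diagonal position and the `D i` side by side in its
last `h` rows, before its rows and columns are numbered. -/
def heavyRowsMatrix (C : ∀ i, Matrix (Fin a) (Fin (a + t i)) R)
    (D : ∀ i, Matrix (Fin h) (Fin (a + t i)) R) :
    Matrix ((Fin ℓ × Fin a) ⊕ Fin h) (Σ i, Fin (a + t i)) R :=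
  Matrix.of fun r c => Sum.elim
    (fun p => if hp : p.1 = c.1 then C p.1 p.2 (Fin.cast (by rw [hp]) c.2) else 0)
    (fun j => D c.1 j c.2) r

variable (C : ∀ i, Matrix (Fin a) (Fin (a + t i)) R) (D : ∀ i, Matrix (Fin h) (Fin (a + t i)) R)

theorem heavyRowsMatrix_inl_of_ne {i i' : Fin ℓ} (hi : i ≠ i') (k : Fin a) (x : Fin (a + t i')) :
    heavyRowsMatrix C D (Sum.inl (i, k)) ⟨i', x⟩ = 0 :=
  dif_neg hi

theorem heavyRowsMatrix_inl_self (i : Fin ℓ) (k : Fin a) (x : Fin (a + t i)) :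
    heavyRowsMatrix C D (Sum.inl (i, k)) ⟨i, x⟩ = C i k x :=
  dif_pos rfl

/-- `heavyRowsMatrix C D` as a square matrix, its rows numbered by `rowEquiv` and its columns by
`columnEquiv`. -/
noncomputable def heavyRowsSquare (ht : ∑ i, t i = h) :
    Matrix (Fin (a * ℓ + h)) (Fin (a * ℓ + h)) R :=
  (heavyRowsMatrix C D).submatrix (rowEquiv a ℓ h).symm (columnEquiv a ht).symm

theorem heavyRowsSquare_submatrix_extendAssignment (ht : ∑ i, t i = h)
    (e : (Σ i, Fin (t i)) ≃ Fin h) (i : Fin ℓ) :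
    (heavyRowsSquare C D ht).submatrix (fun x => extendAssignment a e ⟨i, x⟩)
        (fun x => columnEquiv a ht ⟨i, x⟩) =
      Matrix.of (Fin.append (C i) fun j => D i (e ⟨i, j⟩)) := by
  ext x y
  simp only [heavyRowsSquare, Matrix.submatrix_apply, Equiv.symm_apply_apply, Matrix.of_apply]
  induction x using Fin.addCases with
  | left k =>
    rw [extendAssignment_castAdd, Equiv.symm_apply_apply, heavyRowsMatrix_inl_self]
    exact (congrFun (Fin.append_left (C i) _ k) y).symm
  | right j =>
    rw [extendAssignment_natAdd, Equiv.symm_apply_apply]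
    exact (congrFun (Fin.append_right (C i) (fun j => D i (e ⟨i, j⟩)) j) y).symm

end BlockMatrix

section Determinant

variable {R : Type*} [CommRing R] {a ℓ h : ℕ} {t : Fin ℓ → ℕ}
  (C : ∀ i, Matrix (Fin a) (Fin (a + t i)) R) (D : ∀ i, Matrix (Fin h) (Fin (a + t i)) R)

theorem prod_det_heavyRowsSquare_eq_zero (ht : ∑ i, t i = h)
    {f : (Σ i, Fin (a + t i)) ≃ Fin (a * ℓ + h)} {i : Fin ℓ} {k : Fin a}
    (hik : (f.symm (rowEquiv a ℓ h (Sum.inl (i, k)))).1 ≠ i) :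
    ∏ i, ((heavyRowsSquare C D ht).submatrix (fun x => f ⟨i, x⟩)
      (fun x => columnEquiv a ht ⟨i, x⟩)).det = 0 := by
  obtain ⟨⟨i', x⟩, hx⟩ := f.surjective (rowEquiv a ℓ h (Sum.inl (i, k)))
  rw [← hx, Equiv.symm_apply_apply] at hik
  refine Finset.prod_eq_zero (Finset.mem_univ i') (Matrix.det_eq_zero_of_row_eq_zero x fun y => ?_)
  simp only [heavyRowsSquare, Matrix.submatrix_apply, hx, Equiv.symm_apply_apply]
  exact heavyRowsMatrix_inl_of_ne C D hik.symm k y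

open Classical in
theorem det_blockdiag_with_heavy_rows_general_general (ht : ∑ i, t i = h) :
    (heavyRowsSquare C D ht).det =
      (-1) ^ (a * ∑ i, t i * (ℓ - 1 - i)) *
        ∑ e : (Σ i, Fin (t i)) ≃ Fin h,
          if ∀ i, StrictMono (fun j => e ⟨i, j⟩) then
            ((Equiv.Perm.sign ((sigmaOrderEquiv t ht).symm.trans e) : ℤ) : R) *
              ∏ i, (Matrix.of (Fin.append (C i) fun j => D i (e ⟨i, j⟩))).det
          else 0 := by
  rw [← Finset.sum_filter, det_eq_sum_blockStrictMono (columnEquiv a ht), Finset.mul_sum]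
  symm
  refine Finset.sum_of_injOn (extendAssignment a) extendAssignment_injective.injOn
    (fun e he => ?_) (fun f hf hf_range => ?_) fun e _ => ?_
  · have he_mono : BlockStrictMono e := by simpa [BlockStrictMono] using he
    simpa using blockStrictMono_extendAssignment_iff.2 he_mono
  · rw [Finset.mem_filter_univ] at hf
    by_cases hblock : ∀ i k, (f.symm (rowEquiv a ℓ h (Sum.inl (i, k)))).1 = i
    · obtain ⟨e, he, rfl⟩ := hf.exists_eq_extendAssignment hblock
      exact absurd ⟨e, by simpa [BlockStrictMono] using he, rfl⟩ hf_range
    · push Not at hblock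
      obtain ⟨i, k, hik⟩ := hblock
      rw [prod_det_heavyRowsSquare_eq_zero C D ht hik, mul_zero]
  · simp_rw [heavyRowsSquare_submatrix_extendAssignment, sign_extendAssignment ht e]
    push_cast
    exact (mul_assoc _ _ _).symm

end Determinant

open Classical in
/-- **Lemma B.2 (general determinantal identity).** For `a × (a + tᵢ)` matrices `C i` and
`h × (a + tᵢ)` matrices `D i` (`i ∈ [ℓ]`, `t₁ + ⋯ + t_ℓ = h`), the determinant of the
`(aℓ+h) × (aℓ+h)` block matrix with `C 1, …, C ℓ` in block-diagonal position and
`[D 1 | ⋯ | D ℓ]` as last `h` rows equals `(-1)^(a·Σᵢ tᵢ(ℓ-i))` times the sum over all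
partitions `S₁ ⊔ ⋯ ⊔ S_ℓ = [h]` with `|Sᵢ| = tᵢ` (encoded as bijections
`e : (Σ i, Fin (t i)) ≃ Fin h` which are strictly monotone on each block, so that
`S i = e '' ({i} × Fin (t i))` listed in increasing order) of
`sgn(S₁,…,S_ℓ) ∏ᵢ det [C i ; (D i)^(Sᵢ)]`. -/
theorem det_blockdiag_with_heavy_rows_general
    (F : Type) [Field F] (a ℓ h : ℕ) (hℓ : 1 ≤ ℓ)
    (t : Fin ℓ → ℕ) (ht1 : ∀ i, 1 ≤ t i) (ht : ∑ i, t i = h)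
    (C : (i : Fin ℓ) → Matrix (Fin a) (Fin (a + t i)) F)
    (D : (i : Fin ℓ) → Matrix (Fin h) (Fin (a + t i)) F) :
    (((Matrix.of fun (ρ : (Fin ℓ × Fin a) ⊕ Fin h) (c : Σ i : Fin ℓ, Fin (a + t i)) =>
          Sum.elim (fun p : Fin ℓ × Fin a => if hpc : p.1 = c.1 then C p.1 p.2 (Fin.cast (by rw [hpc]) c.2) else 0)
            (fun j : Fin h => D c.1 j c.2) ρ)).submatrix
        (((Equiv.sumCongr finProdFinEquiv (Equiv.refl (Fin h))).trans
            (finSumFinEquiv.trans (finCongr (by ring)))).symm :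
          Fin (a * ℓ + h) ≃ (Fin ℓ × Fin a) ⊕ Fin h)
        (((finSigmaOrderFinEquiv (fun i => a + t i)).trans
            (finCongr (by
              rw [Finset.sum_add_distrib, ht, Finset.sum_const, Finset.card_univ,
                Fintype.card_fin, smul_eq_mul, mul_comm]))).symm :
          Fin (a * ℓ + h) ≃ Σ i : Fin ℓ, Fin (a + t i))).det
      = (-1 : F) ^ (a * ∑ i : Fin ℓ, t i * (ℓ - 1 - (i : ℕ))) *
        ∑ e : (Σ i : Fin ℓ, Fin (t i)) ≃ Fin h,
          if ∀ i : Fin ℓ, StrictMono (fun j : Fin (t i) => e ⟨i, j⟩) then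
            (((Equiv.Perm.sign
                (((finSigmaOrderFinEquiv t).trans (finCongr ht)).symm.trans e)) : ℤ) : F) *
              ∏ i : Fin ℓ,
                (Matrix.of (Fin.append (fun k : Fin a => C i k)
                    (fun j : Fin (t i) => D i (e ⟨i, j⟩))) :
                  Matrix (Fin (a + t i)) (Fin (a + t i)) F).det
          else 0 :=
  det_blockdiag_with_heavy_rows_general_general C D ht
end

section
/- Let F be a field and a ≥ 0 an integer. Let C_1 be an a×(a+1) matrix, C_2 an a×(a+2) matrix, D_1 a 3×(a+1) matrix, and D_2 a 3×(a+2) matrix over F, with D_i^{(j)} denoting the j-th row of D_i. Then the (2a+3)×(2a+3) block matrix with C_1, C_2 in block-diagonal position in its first 2a rows and [D_1 | D_2] as its last 3 rows has determinant zero if and only if det[C_1; D_1^{(1)}]·det[C_2; D_2^{(2)}; D_2^{(3)}] − det[C_1; D_1^{(2)}]·det[C_2; D_2^{(1)}; D_2^{(3)}] + det[C_1; D_1^{(3)}]·det[C_2; D_2^{(1)}; D_2^{(2)}] = 0. -/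
/-!
Split each of the last rows `[D₁⁽ʲ⁾ | D₂⁽ʲ⁾]` as `[D₁⁽ʲ⁾ | 0] + [0 | D₂⁽ʲ⁾]` and expand the
determinant multilinearly in these rows.  A term survives only if exactly one of them takes its left
part: otherwise more rows than columns are supported on one of the two column blocks.  Moving that
row to the front costs the sign `(-1) ^ j` and leaves a block diagonal determinant.
-/

section

open Matrix Finset

theorem alternatingMap_add_eq_sum_vecCons_removeNth {R M N : Type*} [CommRing R] [AddCommGroup M]
    [Module R M] [AddCommGroup N] [Module R N] {n : ℕ} (g : M [⋀^Fin (n + 1)]→ₗ[R] N)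
    (x y : Fin (n + 1) → M) (hg : ∀ s : Finset (Fin (n + 1)), #s ≠ 1 → g (s.piecewise x y) = 0) :
    g (x + y) = ∑ j : Fin (n + 1), (-1 : ℤ) ^ (j : ℕ) • g (vecCons (x j) (j.removeNth y)) := by
  rw [g.map_add_univ]
  symm
  refine Fintype.sum_of_injective _ (singleton_injective (α := Fin (n + 1))) _ _ ?_ fun j => ?_
  · intro s hs
    refine hg s fun hcard => hs ?_
    obtain ⟨j, rfl⟩ := card_eq_one.1 hcard
    exact Set.mem_range_self j
  · rw [piecewise_singleton, ← Fin.insertNth_removeNth, g.map_insertNth]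

variable {R : Type*} [CommRing R]

theorem det_submatrix_eq_zero_of_card_lt {m n : Type*} [Fintype n] [DecidableEq n]
    (A : Matrix m n R) (e : n ≃ m) {S : Finset m} {T : Finset n} (hcard : #T < #S)
    (hA : ∀ i ∈ S, ∀ j ∉ T, A i j = 0) : (A.submatrix e id).det = 0 := by
  rw [det_apply]
  refine sum_eq_zero fun σ _ => ?_
  obtain ⟨j, hjS, hjT⟩ := exists_mem_notMem_of_card_lt_card
    (hcard.trans_eq (S.card_map (e.symm.trans σ.symm).toEmbedding).symm)
  obtain ⟨i, hiS, rfl⟩ := mem_map.1 hjS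
  have hentry : A.submatrix e id (σ (σ.symm (e.symm i))) (σ.symm (e.symm i)) = 0 := by
    simpa using hA i hiS _ hjT
  rw [prod_eq_zero (f := fun k => A.submatrix e id (σ k) k) (mem_univ _) hentry, smul_zero]

theorem det_submatrix_equiv_eq_zero_iff {k m n : Type*} [Fintype k] [DecidableEq k] [Fintype n]
    [DecidableEq n] (A : Matrix m n R) (e : k ≃ m) (f : k ≃ n) (e' : n ≃ m) :
    (A.submatrix e f).det = 0 ↔ (A.submatrix e' id).det = 0 := by
  let σ : Equiv.Perm n := f.symm.trans (e.trans e'.symm)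
  have hA : A.submatrix e f = ((A.submatrix e' id).submatrix σ id).submatrix f f := by
    ext i j
    simp [σ]
  rw [hA, det_submatrix_equiv_self, det_permute]
  rcases Int.units_eq_one_or (Equiv.Perm.sign σ) with hσ | hσ <;> simp [hσ]

section BottomRows

variable {ι κ n : Type*} [Fintype n] [DecidableEq n]

/-- The determinant of the square matrix `[C; D]` as an alternating map in the rows of `D`.  The
rows are matched with the columns through `e`, which fixes the sign. -/
def detBottomRows (e : n ≃ ι ⊕ κ) (C : Matrix ι n R) : (n → R) [⋀^κ]→ₗ[R] R where
  toMultilinearMap := ((detRowAlternating (n := n)).domDomCongr e).toMultilinearMap.currySum C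
  map_eq_zero_of_eq' _ _ _ hD hij :=
    ((detRowAlternating (n := n)).domDomCongr e).map_eq_zero_of_eq _ hD (Sum.inr_injective.ne hij)

theorem detBottomRows_apply (e : n ≃ ι ⊕ κ) (C : Matrix ι n R) (D : κ → n → R) :
    detBottomRows e C D = ((fromRows C (of D)).submatrix e id).det :=
  rfl

theorem detBottomRows_finSumFinEquiv_symm {a k : ℕ} (C : Matrix (Fin a) (Fin (a + k)) R)
    (D : Fin k → Fin (a + k) → R) :
    detBottomRows finSumFinEquiv.symm C D = (of (Fin.append (fun i => C i) D)).det := by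
  rw [detBottomRows_apply]
  congr 1
  ext i j
  cases i using Fin.addCases <;> simp

theorem detBottomRows_one {a : ℕ} (C : Matrix (Fin a) (Fin (a + 1)) R)
    (x : Fin 1 → Fin (a + 1) → R) :
    detBottomRows finSumFinEquiv.symm C x =
      (of (Fin.snoc (fun i => C i) (x 0)) : Matrix (Fin (a + 1)) (Fin (a + 1)) R).det := by
  rw [detBottomRows_finSumFinEquiv_symm, Fin.append_right_eq_snoc]

theorem detBottomRows_two {a : ℕ} (C : Matrix (Fin a) (Fin (a + 2)) R)
    (y : Fin 2 → Fin (a + 2) → R) :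
    detBottomRows finSumFinEquiv.symm C y =
      (of (Fin.snoc (Fin.snoc (fun i => C i) (y 0)) (y 1)) :
        Matrix (Fin (a + 2)) (Fin (a + 2)) R).det := by
  have hy : y = Fin.snoc (fun _ : Fin 1 => y 0) (y 1) := by
    ext i : 1
    fin_cases i <;> rfl
  rw [detBottomRows_finSumFinEquiv_symm]
  conv_lhs => rw [hy, Fin.append_snoc, Fin.append_right_eq_snoc]

end BottomRows

section TwoBlocks

variable {ι₁ ι₂ n₁ n₂ : Type*} {k : ℕ}

/-- The identification of the rows of `[C₁; x]` and `[C₂; Y]` with those of `[C₁; C₂; x; Y]`, where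
`x` is a single row and `Y` has `k` rows. -/
def regroupRows (e₁ : n₁ ≃ ι₁ ⊕ Fin 1) (e₂ : n₂ ≃ ι₂ ⊕ Fin k) :
    n₁ ⊕ n₂ ≃ (ι₁ ⊕ ι₂) ⊕ Fin (k + 1) :=
  ((e₁.sumCongr e₂).trans (Equiv.sumSumSumComm _ _ _ _)).trans
    ((Equiv.refl _).sumCongr (finSumFinEquiv.trans (finCongr (add_comm 1 k))))

variable [Fintype n₁] [DecidableEq n₁] [Fintype n₂] [DecidableEq n₂]
  (C₁ : Matrix ι₁ n₁ R) (C₂ : Matrix ι₂ n₂ R)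

theorem detBottomRows_fromBlocks_vecCons (e₁ : n₁ ≃ ι₁ ⊕ Fin 1) (e₂ : n₂ ≃ ι₂ ⊕ Fin k)
    (x : n₁ → R) (Y : Fin k → n₂ → R) :
    detBottomRows (regroupRows e₁ e₂) (fromBlocks C₁ 0 0 C₂)
        (vecCons (Sum.elim x 0) fun j => Sum.elim 0 (Y j)) =
      detBottomRows e₁ C₁ (fun _ => x) * detBottomRows e₂ C₂ Y := by
  simp only [detBottomRows_apply]
  rw [← det_fromBlocks_zero₂₁ _ 0]
  congr 1
  have hzero (i : Fin 1) : Fin.cast (add_comm 1 k) (Fin.castAdd k i) = 0 := by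
    simp [Fin.ext_iff]
  ext (i | i) j
  · rcases hi : e₁ i with i' | i' <;> rcases j with j | j <;> simp [regroupRows, hi, hzero]
  · rcases hi : e₂ i with i' | i' <;> rcases j with j | j <;> simp [regroupRows, hi]

theorem detBottomRows_fromBlocks_piecewise_eq_zero (e₁ : n₁ ≃ ι₁ ⊕ Fin 1)
    (e₂ : n₂ ≃ ι₂ ⊕ Fin k) (D₁ : Fin (k + 1) → n₁ → R) (D₂ : Fin (k + 1) → n₂ → R)
    {s : Finset (Fin (k + 1))} (hs : #s ≠ 1) :
    detBottomRows (regroupRows e₁ e₂) (fromBlocks C₁ 0 0 C₂)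
      (s.piecewise (fun j => Sum.elim (D₁ j) 0) fun j => Sum.elim 0 (D₂ j)) = 0 := by
  have : Finite ι₁ := .of_injective _ (e₁.symm.injective.comp Sum.inl_injective)
  have : Finite ι₂ := .of_injective _ (e₂.symm.injective.comp Sum.inl_injective)
  cases nonempty_fintype ι₁
  cases nonempty_fintype ι₂
  have hcard₁ : Fintype.card n₁ = Fintype.card ι₁ + 1 := by simpa using Fintype.card_congr e₁
  have hcard₂ : Fintype.card n₂ = Fintype.card ι₂ + k := by simpa using Fintype.card_congr e₂
  rw [detBottomRows_apply]
  rcases s.eq_empty_or_nonempty with rfl | hne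
  · refine det_submatrix_eq_zero_of_card_lt _ _ (S := (disjSum ∅ univ).disjSum univ)
      (T := disjSum ∅ univ) (by simp [hcard₂]) ?_
    rintro ((i | i) | i) hi (j | j) hj <;> simp_all
  · have htwo : 1 < #s := by grind [hne.card_pos]
    refine det_submatrix_eq_zero_of_card_lt _ _ (S := (univ.disjSum ∅).disjSum s)
      (T := univ.disjSum ∅) (by simpa [hcard₁]) ?_
    rintro ((i | i) | i) hi (j | j) hj <;> simp_all

theorem det_fromRows_fromBlocks_fromCols (e₁ : n₁ ≃ ι₁ ⊕ Fin 1)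
    (e₂ : n₂ ≃ ι₂ ⊕ Fin k) (D₁ : Matrix (Fin (k + 1)) n₁ R) (D₂ : Matrix (Fin (k + 1)) n₂ R) :
    ((fromRows (fromBlocks C₁ 0 0 C₂) (fromCols D₁ D₂)).submatrix (regroupRows e₁ e₂) id).det =
      ∑ j : Fin (k + 1), (-1) ^ (j : ℕ) *
        (detBottomRows e₁ C₁ (fun _ => D₁.row j) * detBottomRows e₂ C₂ (j.removeNth D₂.row)) := by
  have hsplit : fromCols D₁ D₂ = of ((fun j => Sum.elim (D₁.row j) (0 : n₂ → R)) +
      fun j => Sum.elim (0 : n₁ → R) (D₂.row j)) := by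
    ext j (i | i) <;> simp
  rw [hsplit, ← detBottomRows_apply, alternatingMap_add_eq_sum_vecCons_removeNth _ _ _
    fun s => detBottomRows_fromBlocks_piecewise_eq_zero C₁ C₂ e₁ e₂ D₁.row D₂.row]
  refine sum_congr rfl fun j _ => ?_
  rw [zsmul_eq_mul, Int.cast_pow, Int.cast_neg, Int.cast_one, ← detBottomRows_fromBlocks_vecCons]
  rfl

end TwoBlocks

theorem det_blockdiag_two_groups_h3_eq_zero_iff_general {ι : Type*} [Fintype ι] [DecidableEq ι]
    {a b : ℕ} (C₁ : Matrix (Fin a) (Fin (a + 1)) R) (C₂ : Matrix (Fin b) (Fin (b + 2)) R)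
    (D₁ : Matrix (Fin 3) (Fin (a + 1)) R) (D₂ : Matrix (Fin 3) (Fin (b + 2)) R)
    (e : ι ≃ (Fin a ⊕ Fin b) ⊕ Fin 3) (f : ι ≃ Fin (a + 1) ⊕ Fin (b + 2)) :
    ((fromRows (fromBlocks C₁ 0 0 C₂) (fromCols D₁ D₂)).submatrix e f).det = 0 ↔
      (of (Fin.snoc (fun i => C₁ i) (D₁ 0)) : Matrix (Fin (a + 1)) (Fin (a + 1)) R).det *
          (of (Fin.snoc (Fin.snoc (fun i => C₂ i) (D₂ 1)) (D₂ 2)) :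
            Matrix (Fin (b + 2)) (Fin (b + 2)) R).det -
        (of (Fin.snoc (fun i => C₁ i) (D₁ 1)) : Matrix (Fin (a + 1)) (Fin (a + 1)) R).det *
          (of (Fin.snoc (Fin.snoc (fun i => C₂ i) (D₂ 0)) (D₂ 2)) :
            Matrix (Fin (b + 2)) (Fin (b + 2)) R).det +
        (of (Fin.snoc (fun i => C₁ i) (D₁ 2)) : Matrix (Fin (a + 1)) (Fin (a + 1)) R).det *
          (of (Fin.snoc (Fin.snoc (fun i => C₂ i) (D₂ 0)) (D₂ 1)) :
            Matrix (Fin (b + 2)) (Fin (b + 2)) R).det = 0 := by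
  rw [det_submatrix_equiv_eq_zero_iff _ e f (regroupRows finSumFinEquiv.symm finSumFinEquiv.symm),
    det_fromRows_fromBlocks_fromCols, Fin.sum_univ_three]
  have hsuccAbove : (2 : Fin 3).succAbove 1 = 1 := rfl
  simp [detBottomRows_one, detBottomRows_two, Fin.removeNth_apply, Fin.tail, row_def, hsuccAbove,
    sub_eq_add_neg]

end

/-- **Lemma 5.1.** Let `C1` be `a × (a+1)`, `C2` be `a × (a+2)`, `D1` be `3 × (a+1)` and
`D2` be `3 × (a+2)`.  The `(2a+3) × (2a+3)` block matrix with `C1, C2` in block-diagonal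
position and `[D1 | D2]` as its last three rows has determinant zero if and only if
`det[C1; D1⁽¹⁾]·det[C2; D2⁽²⁾; D2⁽³⁾] - det[C1; D1⁽²⁾]·det[C2; D2⁽¹⁾; D2⁽³⁾]
 + det[C1; D1⁽³⁾]·det[C2; D2⁽¹⁾; D2⁽²⁾] = 0`. -/
theorem det_blockdiag_two_groups_h3_eq_zero_iff
    (F : Type) [Field F] (a : ℕ)
    (C1 : Matrix (Fin a) (Fin (a + 1)) F) (C2 : Matrix (Fin a) (Fin (a + 2)) F)
    (D1 : Matrix (Fin 3) (Fin (a + 1)) F) (D2 : Matrix (Fin 3) (Fin (a + 2)) F) :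
    (((Matrix.of fun (ρ : (Fin a ⊕ Fin a) ⊕ Fin 3) (c : Fin (a + 1) ⊕ Fin (a + 2)) =>
          Sum.elim
            (Sum.elim (fun j : Fin a => Sum.elim (fun c1 => C1 j c1) (fun _ => (0 : F)) c)
              (fun j : Fin a => Sum.elim (fun _ => (0 : F)) (fun c2 => C2 j c2) c))
            (fun j : Fin 3 => Sum.elim (fun c1 => D1 j c1) (fun c2 => D2 j c2) c) ρ)).submatrix
        (((Equiv.sumCongr finSumFinEquiv (Equiv.refl (Fin 3))).trans
            (finSumFinEquiv.trans (finCongr (by omega)))).symm :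
          Fin (2 * a + 3) ≃ (Fin a ⊕ Fin a) ⊕ Fin 3)
        ((finSumFinEquiv.trans (finCongr (by omega))).symm :
          Fin (2 * a + 3) ≃ Fin (a + 1) ⊕ Fin (a + 2))).det = 0 ↔
      (Matrix.of (Fin.snoc (fun k : Fin a => C1 k) (D1 0)) :
            Matrix (Fin (a + 1)) (Fin (a + 1)) F).det *
          (Matrix.of (Fin.snoc (Fin.snoc (fun k : Fin a => C2 k) (D2 1)) (D2 2)) :
            Matrix (Fin (a + 2)) (Fin (a + 2)) F).det -
        (Matrix.of (Fin.snoc (fun k : Fin a => C1 k) (D1 1)) :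
            Matrix (Fin (a + 1)) (Fin (a + 1)) F).det *
          (Matrix.of (Fin.snoc (Fin.snoc (fun k : Fin a => C2 k) (D2 0)) (D2 2)) :
            Matrix (Fin (a + 2)) (Fin (a + 2)) F).det +
        (Matrix.of (Fin.snoc (fun k : Fin a => C1 k) (D1 2)) :
            Matrix (Fin (a + 1)) (Fin (a + 1)) F).det *
          (Matrix.of (Fin.snoc (Fin.snoc (fun k : Fin a => C2 k) (D2 0)) (D2 1)) :
            Matrix (Fin (a + 2)) (Fin (a + 2)) F).det = 0 := by
  convert det_blockdiag_two_groups_h3_eq_zero_iff_general (ι := Fin (2 * a + 3))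
    C1 C2 D1 D2 _ _ using 4
  ext ((i | i) | i) (k | k) <;> rfl
end

section
/- Let r ∣ n and a < r be positive integers, let g = n/r, and assume n − ga − 2 > 0. Let q be a prime power such that the multiplicative group 𝔽_q^* contains a subgroup G with |G| ≥ r and with at least n/r cosets (i.e., (q−1)/|G| ≥ n/r). Then there exists a maximally recoverable (n, r, h=2, a, q)-local reconstruction code. -/
/-- The parity check matrix of an `(n, r, h, a, q)`-local reconstruction code with `g = n/r`
local groups, given by local-parity matrices `A i` (in block-diagonal position) and
heavy-parity matrices `B i`. Rows are indexed by `(Fin g × Fin a) ⊕ Fin h`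
(local parity rows first, then the `h` heavy rows) and columns by `Fin g × Fin r`
(the `i`-th local group consists of the columns with first coordinate `i`). -/
def lrcParityCheck (F : Type) [Field F] (g r a h : ℕ)
    (A : Fin g → Matrix (Fin a) (Fin r) F)
    (B : Fin g → Matrix (Fin h) (Fin r) F) :
    Matrix ((Fin g × Fin a) ⊕ Fin h) (Fin g × Fin r) F :=
  fun ρ c =>
    Sum.elim (fun p : Fin g × Fin a => if p.1 = c.1 then A p.1 p.2 c.2 else 0)
      (fun j : Fin h => B c.1 j c.2) ρ

/-- `A, B` define a maximally recoverable LRC:  every `a × a` minor of each `A i` is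
nonzero (stated: any `a` columns of `A i` are linearly independent), and for every set `E`
of `a * g + h` columns containing at least `a` columns from each local group, the
corresponding columns of the parity check matrix are linearly independent (equivalently,
the square submatrix of the parity check matrix on the columns of `E` is invertible). -/
def IsMRLRC (F : Type) [Field F] (g r a h : ℕ)
    (A : Fin g → Matrix (Fin a) (Fin r) F)
    (B : Fin g → Matrix (Fin h) (Fin r) F) : Prop :=
  (∀ i : Fin g, ∀ S : Finset (Fin r), S.card = a →
      LinearIndependent F (fun c : {x // x ∈ S} => fun j : Fin a => A i j c.1)) ∧
  (∀ E : Finset (Fin g × Fin r), E.card = a * g + h →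
      (∀ i : Fin g, a ≤ (E.filter (fun x => x.1 = i)).card) →
      LinearIndependent F
        (fun c : {x // x ∈ E} => fun ρ => lrcParityCheck F g r a h A B ρ c.1))

/-- There is a maximally recoverable `(n = g * r, r, h, a, q)`-local reconstruction code
with `g` local groups each of size `r`, over the field with `q` elements. -/
def ExistsMRLRC (g r h a q : ℕ) : Prop :=
  ∃ (F : Type) (_ : Field F) (_ : Fintype F),
    Fintype.card F = q ∧
      ∃ (A : Fin g → Matrix (Fin a) (Fin r) F) (B : Fin g → Matrix (Fin h) (Fin r) F),
        IsMRLRC F g r a h A B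

/-!
Take distinct `β c` in `G`, representatives `lam i` of distinct cosets of `G`, local parity rows
`β c ^ j` for `1 ≤ j ≤ a`, and heavy rows `1` and `lam i * β c ^ (a + 1)`. Let `f` be a dependency
among `a * g + 2` columns, `a` or more of them in each group. A Vandermonde argument kills `f` on
every group contributing exactly `a` columns, and on a group contributing `a + 2` columns if there
is one. In the remaining case two groups contribute `a + 1` columns each. On such a group, with
set of columns `S i`, expanding `∏ (X - β c)` turns the top moment `∑ f c * β c ^ (a + 1)` into
`± (∏ β c) * ∑ f c`, so the two heavy equations form a `2 × 2` Vandermonde system for the sums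
`∑ f c` with nodes `lam i * ∏ β c`. These nodes are distinct because they lie in distinct cosets.
-/

namespace LocalReconstructionCode

open Finset Polynomial

section Moments

variable {R κ : Type*} [CommRing R] {S : Finset κ} {f β : κ → R} {a : ℕ}

theorem eq_zero_of_sum_mul_pow_eq_zero [IsDomain R] (hβ : Set.InjOn β S)
    (h : ∀ j < #S, ∑ c ∈ S, f c * β c ^ j = 0) : ∀ c ∈ S, f c = 0 := by
  have coeff_zero : (fun k => f (S.equivFin.symm k)) = 0 := by
    refine Matrix.eq_zero_of_forall_pow_sum_mul_pow_eq_zero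
      (f := fun k => β (S.equivFin.symm k)) (fun k l hkl => ?_) fun j => ?_
    · exact S.equivFin.symm.injective
        (Subtype.ext (hβ (S.equivFin.symm k).2 (S.equivFin.symm l).2 hkl))
    · rw [← h j j.2, ← sum_coe_sort S fun c => f c * β c ^ (j : ℕ)]
      exact S.equivFin.symm.sum_comp fun c => f c * β c ^ (j : ℕ)
  intro c hc
  simpa using congrFun coeff_zero (S.equivFin ⟨c, hc⟩)

theorem eq_zero_of_sum_mul_pow_succ_eq_zero [IsDomain R] (hβ : Set.InjOn β S)
    (hβ₀ : ∀ c ∈ S, β c ≠ 0) (h : ∀ j < #S, ∑ c ∈ S, f c * β c ^ (j + 1) = 0) :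
    ∀ c ∈ S, f c = 0 := by
  have mul_zero_of_mem : ∀ c ∈ S, f c * β c = 0 :=
    eq_zero_of_sum_mul_pow_eq_zero hβ fun j hj => by
      simpa only [pow_succ', ← mul_assoc] using h j hj
  exact fun c hc => (mul_eq_zero.mp (mul_zero_of_mem c hc)).resolve_right (hβ₀ c hc)

theorem sum_mul_pow_card_eq_prod_mul_sum (hS : #S = a + 1)
    (h : ∀ j < a, ∑ c ∈ S, f c * β c ^ (j + 1) = 0) :
    ∑ c ∈ S, f c * β c ^ (a + 1) = (-1) ^ a * (∏ c ∈ S, β c) * ∑ c ∈ S, f c := by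
  nontriviality R
  set p : R[X] := ∏ c ∈ S, (X - C (β c)) with hp
  have natDegree_p : p.natDegree = a + 1 := by
    rw [hp, natDegree_finsetProd_X_sub_C_eq_card, hS]
  have leading_p : p.coeff (a + 1) = 1 := by
    rw [← natDegree_p]
    exact monic_prod_X_sub_C β S
  have constant_p : p.coeff 0 = (-1) ^ (a + 1) * ∏ c ∈ S, β c := by
    simp [hp, coeff_zero_prod, prod_neg, hS]
  have moment_p : ∑ c ∈ S, f c * p.eval (β c) = 0 :=
    sum_eq_zero fun c hc => by simp [hp, eval_prod, prod_eq_zero hc]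
  have expand_p : ∑ c ∈ S, f c * p.eval (β c)
      = ∑ j ∈ range (a + 2), p.coeff j * ∑ c ∈ S, f c * β c ^ j := by
    simp_rw [eval_eq_sum_range, natDegree_p, mul_sum]
    rw [sum_comm]
    simp only [mul_left_comm]
  rw [expand_p, sum_range_succ, sum_range_succ', leading_p, constant_p,
    sum_eq_zero fun j hj => by rw [h j (mem_range.mp hj), mul_zero]] at moment_p
  simp only [pow_zero, mul_one] at moment_p
  linear_combination moment_p

end Moments

section HeavyEquations

variable {R ι κ : Type*} [CommRing R] [IsDomain R] [Fintype ι]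
  {S : ι → Finset κ} {f β : κ → R} {lam : ι → R} {a : ℕ}

theorem eq_zero_of_one_group_card_eq_add_two {i₀ : ι} (hβ : ∀ i, Set.InjOn β (S i))
    (hβ₀ : ∀ c, β c ≠ 0) (hlam : lam i₀ ≠ 0) (hi₀ : #(S i₀) = a + 2) (hS : ∀ i ≠ i₀, #(S i) = a)
    (hlocal : ∀ i, ∀ j < a, ∑ c ∈ S i, f c * β c ^ (j + 1) = 0)
    (hsum : ∑ i, ∑ c ∈ S i, f c = 0)
    (htop : ∑ i, lam i * ∑ c ∈ S i, f c * β c ^ (a + 1) = 0) :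
    ∀ i, ∀ c ∈ S i, f c = 0 := by
  have vanish : ∀ i ≠ i₀, ∀ c ∈ S i, f c = 0 := fun i hi =>
    eq_zero_of_sum_mul_pow_succ_eq_zero (hβ i) (fun c _ => hβ₀ c) fun j hj =>
      hlocal i j (hS i hi ▸ hj)
  have sum_i₀ : ∑ c ∈ S i₀, f c = 0 := by
    rwa [Fintype.sum_eq_single i₀ fun i hi => sum_eq_zero (vanish i hi)] at hsum
  have top_i₀ : ∑ c ∈ S i₀, f c * β c ^ (a + 1) = 0 := by
    rw [Fintype.sum_eq_single i₀ fun i hi => by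
      rw [sum_eq_zero fun c hc => by rw [vanish i hi c hc, zero_mul], mul_zero]] at htop
    exact (mul_eq_zero.mp htop).resolve_left hlam
  intro i
  obtain rfl | hi := eq_or_ne i i₀
  · refine eq_zero_of_sum_mul_pow_eq_zero (hβ i) fun j hj => ?_
    obtain rfl | rfl | ⟨k, rfl, hk⟩ : j = 0 ∨ j = a + 1 ∨ ∃ k, j = k + 1 ∧ k < a := by
      cases j <;> grind
    · simpa using sum_i₀
    · exact top_i₀
    · exact hlocal i k hk
  · exact vanish i hi

theorem eq_zero_of_two_groups_card_eq_add_one {I : Finset ι} (hI : #I = 2)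
    (hβ : ∀ i, Set.InjOn β (S i)) (hβ₀ : ∀ c, β c ≠ 0)
    (hnode : Set.InjOn (fun i => lam i * ∏ c ∈ S i, β c) I)
    (hmem : ∀ i ∈ I, #(S i) = a + 1) (hnotMem : ∀ i ∉ I, #(S i) = a)
    (hlocal : ∀ i, ∀ j < a, ∑ c ∈ S i, f c * β c ^ (j + 1) = 0)
    (hsum : ∑ i, ∑ c ∈ S i, f c = 0)
    (htop : ∑ i, lam i * ∑ c ∈ S i, f c * β c ^ (a + 1) = 0) :
    ∀ i, ∀ c ∈ S i, f c = 0 := by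
  have vanish : ∀ i ∉ I, ∀ c ∈ S i, f c = 0 := fun i hi =>
    eq_zero_of_sum_mul_pow_succ_eq_zero (hβ i) (fun c _ => hβ₀ c) fun j hj =>
      hlocal i j (hnotMem i hi ▸ hj)
  have sum_I : ∑ i ∈ I, ∑ c ∈ S i, f c = 0 := by
    rwa [sum_subset (subset_univ I) fun i _ hi => sum_eq_zero (vanish i hi)]
  have top_I : (-1) ^ a * ∑ i ∈ I, (∑ c ∈ S i, f c) * (lam i * ∏ c ∈ S i, β c) = 0 := by
    rw [← htop, mul_sum, ← sum_subset (subset_univ I) fun i _ hi => by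
      rw [sum_eq_zero fun c hc => by rw [vanish i hi c hc, zero_mul], mul_zero]]
    refine sum_congr rfl fun i hi => ?_
    rw [sum_mul_pow_card_eq_prod_mul_sum (hmem i hi) (hlocal i)]
    ring
  have sum_eq_zero_of_mem : ∀ i ∈ I, ∑ c ∈ S i, f c = 0 := by
    refine eq_zero_of_sum_mul_pow_eq_zero hnode fun j hj => ?_
    obtain rfl | rfl : j = 0 ∨ j = 1 := by omega
    · simpa using sum_I
    · simpa using top_I
  intro i
  by_cases hi : i ∈ I
  · refine eq_zero_of_sum_mul_pow_eq_zero (hβ i) fun j hj => ?_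
    obtain rfl | ⟨k, rfl, hk⟩ : j = 0 ∨ ∃ k, j = k + 1 ∧ k < a := by
      have := hmem i hi
      cases j <;> grind
    · simpa using sum_eq_zero_of_mem i hi
    · exact hlocal i k hk
  · exact vanish i hi

theorem exists_eq_two_or_card_eq_two_of_sum_eq_two {d : ι → ℕ} (hd : ∑ i, d i = 2) :
    (∃ i₀, d i₀ = 2 ∧ ∀ i ≠ i₀, d i = 0) ∨
      ∃ I : Finset ι, #I = 2 ∧ (∀ i ∈ I, d i = 1) ∧ ∀ i ∉ I, d i = 0 := by
  classical
  by_cases h : ∃ i₀, 2 ≤ d i₀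
  · obtain ⟨i₀, hi₀⟩ := h
    have hsplit := add_sum_erase univ d (mem_univ i₀)
    have hrest : ∑ i ∈ univ.erase i₀, d i = 0 := by omega
    exact .inl ⟨i₀, by omega, fun i hi => sum_eq_zero_iff.mp hrest i (by simpa using hi)⟩
  · push Not at h
    refine .inr ⟨univ.filter (d · = 1), ?_, by simp, fun i hi => ?_⟩
    · rw [card_filter, ← hd]
      refine sum_congr rfl fun i _ => ?_
      have := h i
      split_ifs <;> omega
    · have := h i
      have : d i ≠ 1 := by simpa using hi
      omega

theorem eq_zero_of_sum_card_eq (hβ : ∀ i, Set.InjOn β (S i)) (hβ₀ : ∀ c, β c ≠ 0)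
    (hlam : ∀ i, lam i ≠ 0) (hnode : Function.Injective fun i => lam i * ∏ c ∈ S i, β c)
    (hS : ∀ i, a ≤ #(S i)) (hcard : ∑ i, #(S i) = a * Fintype.card ι + 2)
    (hlocal : ∀ i, ∀ j < a, ∑ c ∈ S i, f c * β c ^ (j + 1) = 0)
    (hsum : ∑ i, ∑ c ∈ S i, f c = 0)
    (htop : ∑ i, lam i * ∑ c ∈ S i, f c * β c ^ (a + 1) = 0) :
    ∀ i, ∀ c ∈ S i, f c = 0 := by
  choose d hd using fun i => Nat.exists_eq_add_of_le (hS i)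
  have hd₂ : ∑ i, d i = 2 := by
    simp only [hd, sum_add_distrib, sum_const, card_univ, smul_eq_mul] at hcard
    linarith
  obtain ⟨i₀, hi₀, hi⟩ | ⟨I, hI, hmem, hnotMem⟩ :=
    exists_eq_two_or_card_eq_two_of_sum_eq_two hd₂
  · exact eq_zero_of_one_group_card_eq_add_two hβ hβ₀ (hlam i₀) (by rw [hd, hi₀])
      (fun i h => by rw [hd, hi i h, add_zero]) hlocal hsum htop
  · exact eq_zero_of_two_groups_card_eq_add_one hI hβ hβ₀ hnode.injOn
      (fun i h => by rw [hd, hmem i h]) (fun i h => by rw [hd, hnotMem i h, add_zero])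
      hlocal hsum htop

end HeavyEquations

theorem linearIndependent_lrcParityCheck_iff {F : Type} [Field F] {g r a h : ℕ}
    {A : Fin g → Matrix (Fin a) (Fin r) F} {B : Fin g → Matrix (Fin h) (Fin r) F}
    {E : Finset (Fin g × Fin r)} :
    LinearIndependent F (fun c : {x // x ∈ E} => fun ρ => lrcParityCheck F g r a h A B ρ c.1) ↔
      ∀ f : Fin g × Fin r → F, (∀ i j, ∑ x ∈ E with x.1 = i, f x * A i j x.2 = 0) →
        (∀ j, ∑ i, ∑ x ∈ E with x.1 = i, f x * B i j x.2 = 0) → ∀ x ∈ E, f x = 0 := by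
  have heavy (f : Fin g × Fin r → F) (j : Fin h) :
      ∑ i, ∑ x ∈ E with x.1 = i, f x * B i j x.2 = ∑ x ∈ E, f x * B x.1 j x.2 := by
    rw [← sum_fiberwise E Prod.fst]
    exact sum_congr rfl fun i _ => sum_congr rfl fun x hx => by rw [(mem_filter.mp hx).2]
  have kernel (f : Fin g × Fin r → F) :
      ∑ x ∈ E, f x • (fun ρ => lrcParityCheck F g r a h A B ρ x) = 0 ↔
        (∀ i j, ∑ x ∈ E with x.1 = i, f x * A i j x.2 = 0) ∧
          ∀ j, ∑ i, ∑ x ∈ E with x.1 = i, f x * B i j x.2 = 0 := by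
    simp_rw [heavy]
    simp [funext_iff, lrcParityCheck, sum_filter, eq_comm]
  refine (linearIndepOn_finset_iff
    (v := fun x ρ => lrcParityCheck F g r a h A B ρ x)).trans (forall_congr' fun f => ?_)
  rw [kernel, and_imp]

theorem injective_mul_prod_of_injective_mk {M ι κ : Type*} [CommGroup M] {H : Subgroup M}
    {β : κ → M} (hβ : ∀ c, β c ∈ H) {lam : ι → M}
    (hlam : Function.Injective fun i => (lam i : M ⧸ H)) (S : ι → Finset κ) :
    Function.Injective fun i => lam i * ∏ c ∈ S i, β c := by
  refine Function.Injective.of_comp (f := ((↑) : M → M ⧸ H)) ?_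
  have hmk : ∀ i, ((lam i * ∏ c ∈ S i, β c : M) : M ⧸ H) = lam i := fun i =>
    QuotientGroup.mk_mul_of_mem _ (H.prod_mem fun c _ => hβ c)
  simpa only [Function.comp_def, hmk] using hlam

section Construction

/-- The local parity matrix of the construction, with columns `(β c, β c ^ 2, …, β c ^ a)`; it is
the same in every local group. The exponent `0` is left to `heavyParity`. -/
def localParity {R κ : Type*} [Monoid R] (a : ℕ) (β : κ → R) : Matrix (Fin a) κ R :=
  .of fun j c => β c ^ ((j : ℕ) + 1)

/-- The two heavy parity rows of the construction on a local group with multiplier `lam`: they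
extend the exponents `1, …, a` of `localParity` by `0` and `a + 1`, the latter scaled by `lam`. -/
def heavyParity {R κ : Type*} [Monoid R] (a : ℕ) (β : κ → R) (lam : R) : Matrix (Fin 2) κ R :=
  .of ![fun _ => 1, fun c => lam * β c ^ (a + 1)]

theorem linearIndepOn_localParity {R κ : Type*} [CommRing R] [IsDomain R] {a : ℕ} {β : κ → R}
    (hβ : Function.Injective β) (hβ₀ : ∀ c, β c ≠ 0) {S : Finset κ} (hS : #S ≤ a) :
    LinearIndepOn R (fun c j => localParity a β j c) S := by
  refine linearIndepOn_finset_iff.mpr fun f hf =>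
    eq_zero_of_sum_mul_pow_succ_eq_zero hβ.injOn (fun c _ => hβ₀ c) fun j hj => ?_
  simpa [localParity] using congrFun hf ⟨j, hj.trans_le hS⟩

variable {F : Type} [Field F] {G : Subgroup Fˣ} {g r : ℕ}

theorem isMRLRC_localParity_heavyParity (a : ℕ) {β : Fin r → Fˣ} (hβ : Function.Injective β)
    (hβG : ∀ c, β c ∈ G) {lam : Fin g → Fˣ}
    (hlam : Function.Injective fun i => (lam i : Fˣ ⧸ G)) :
    IsMRLRC F g r a 2 (fun _ => localParity a fun c => (β c : F))
      (fun i => heavyParity a (fun c => (β c : F)) (lam i)) := by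
  have hβF : Function.Injective fun c => (β c : F) := Units.val_injective.comp hβ
  refine ⟨fun _ S hS => linearIndepOn_localParity hβF (fun c => (β c).ne_zero) hS.le,
    fun E hE hEa => linearIndependent_lrcParityCheck_iff.mpr fun f hlocal hheavy x hx => ?_⟩
  refine eq_zero_of_sum_card_eq (S := fun i => {x ∈ E | x.1 = i})
    (β := fun x => (β x.2 : F)) (lam := fun i => (lam i : F)) (a := a) ?_
    (fun x => (β x.2).ne_zero) (fun i => (lam i).ne_zero) ?_ hEa ?_ ?_ ?_ ?_ x.1 x (by simpa)
  · intro i x hx y hy hxy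
    simp only [coe_filter, Set.mem_ofPred_eq] at hx hy
    exact Prod.ext (hx.2.trans hy.2.symm) (hβF hxy)
  · simpa [Function.comp_def] using Units.val_injective.comp
      (injective_mul_prod_of_injective_mk (fun x : Fin g × Fin r => hβG x.2) hlam
        fun i => {x ∈ E | x.1 = i})
  · rw [← card_eq_sum_card_fiberwise fun _ _ => mem_coe.mpr (mem_univ _), hE, Fintype.card_fin]
  · exact fun i j hj => by simpa [localParity] using hlocal i ⟨j, hj⟩
  · simpa [heavyParity] using hheavy 0
  · simpa [heavyParity, mul_sum, mul_left_comm] using hheavy 1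

end Construction

theorem nonempty_fin_embedding_of_le_card {α : Type*} {k : ℕ} (h : k ≤ ENat.card α) :
    Nonempty (Fin k ↪ α) := by
  have hk : (k : Cardinal) ≤ Cardinal.mk α := Cardinal.natCast_le_toENat.mp h
  exact Cardinal.lift_mk_le'.mp (by simpa using hk)

end LocalReconstructionCode

open LocalReconstructionCode in
theorem exists_mrlrc_h2_of_subgroup_general (g r a : ℕ) (F : Type) [Field F] (G : Subgroup Fˣ)
    (hG1 : r ≤ ENat.card G) (hG2 : g ≤ ENat.card (Fˣ ⧸ G)) :
    ∃ (A : Fin g → Matrix (Fin a) (Fin r) F) (B : Fin g → Matrix (Fin 2) (Fin r) F),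
      IsMRLRC F g r a 2 A B := by
  obtain ⟨β⟩ := nonempty_fin_embedding_of_le_card hG1
  obtain ⟨coset⟩ := nonempty_fin_embedding_of_le_card hG2
  refine ⟨_, _, isMRLRC_localParity_heavyParity a (β := fun c => β c) (G := G)
    (Subtype.val_injective.comp β.injective) (fun c => (β c).2)
    (lam := fun i => (coset i).out) ?_⟩
  simpa using coset.injective

/-- **Lemma 4.2.** Let `r ∣ n`, `a < r`, `g = n/r`, and `n - g·a - 2 > 0`. If the
multiplicative group of the field `F` of order `q` contains a subgroup `G` of size at
least `r` with at least `n/r` cosets, then there exists a maximally recoverable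
`(n, r, h = 2, a, q)`-local reconstruction code. -/
theorem exists_mrlrc_h2_of_subgroup
    (n r a q : ℕ) (hr : 0 < r) (hrn : r ∣ n) (har : a < r)
    (hk : (n / r) * a + 2 < n)
    (F : Type) [Field F] [Fintype F] (hF : Fintype.card F = q)
    (G : Subgroup Fˣ) (hG1 : r ≤ Nat.card G) (hG2 : n / r ≤ G.index) :
    ExistsMRLRC (n / r) r 2 a q :=
  ⟨F, inferInstance, inferInstance, hF, exists_mrlrc_h2_of_subgroup_general _ r a F G
    (by simpa [ENat.card_eq_coe_natCard] using hG1)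
    (by simpa [ENat.card_eq_coe_natCard, Subgroup.index] using hG2)⟩
end
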